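/- Let X be a uniformly s-path connected metric space, let A ⊆ X and r > 0. Then the union of any collection of s-path components of X \ N_r(A) is a coarse complementary component of A. -/

import Mathlib

/-!
Let `c ∈ ⋃₀ 𝒞` and `y ∉ ⋃₀ 𝒞` both be within `R` of a point `x`. Uniform `s`-path connectedness
joins `c` to `y` by an `s`-path of diameter at most `ρ (2R)`. If this path avoided `N_r(A)`, it
would stay in the component of `c`, because a component absorbs every point of `X \ N_r(A)` at
distance at most `s` from it (`IsSPathComponent.mem_of_dist_le`), and so `y` would lie in
`⋃₀ 𝒞`. Hence the path meets `N_r(A)`, and `x` is within `R + ρ (2R) + r` of `A`.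
-/

/-- The open `R`-neighborhood `N_R(A) = {x | dist(x, A) < R}` of a subset of a metric space. -/
def coarseNbhd {X : Type*} [MetricSpace X] (R : ℝ) (A : Set X) : Set X :=
  {x | ∃ a ∈ A, dist x a < R}

/-- `C` is a coarse complementary component of `A`: for every `R > 0` there is `R' > 0`
with `N_R(C) ∩ N_R(X \ C) ⊆ N_{R'}(A)`. -/
def IsCoarseComplementaryComponent {X : Type*} [MetricSpace X] (A C : Set X) : Prop :=
  ∀ R > (0 : ℝ), ∃ R' > (0 : ℝ), coarseNbhd R C ∩ coarseNbhd R Cᶜ ⊆ coarseNbhd R' A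

/-- An `s`-path from `x` to `y` lying in `M`: a finite sequence `x = x_0, …, x_n = y` of points
of `M` with consecutive distances at most `s`. -/
def IsSPath {X : Type*} [MetricSpace X] (s : ℝ) (M : Set X) (x y : X) : Prop :=
  ∃ (n : ℕ) (f : ℕ → X), f 0 = x ∧ f n = y ∧ (∀ i ≤ n, f i ∈ M) ∧
    ∀ i < n, dist (f i) (f (i + 1)) ≤ s

/-- A subset `M` is `s`-path connected if any two of its points are joined by an
`s`-path lying in `M`. -/
def SPathConnected {X : Type*} [MetricSpace X] (s : ℝ) (M : Set X) : Prop :=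
  ∀ x ∈ M, ∀ y ∈ M, IsSPath s M x y

/-- `C` is an `s`-path component of `W`: a maximal `s`-path connected subset of `W`. -/
def IsSPathComponent {X : Type*} [MetricSpace X] (s : ℝ) (W C : Set X) : Prop :=
  C ⊆ W ∧ SPathConnected s C ∧ ∀ D, C ⊆ D → D ⊆ W → SPathConnected s D → D = C

/-- `X` is uniformly `s`-path connected with control function `ρ`: any two points at distance
at most `r` are joined by an `s`-path in `X` of diameter at most `ρ(r)`. -/
def UniformlySPathConnected (X : Type*) [MetricSpace X] (s : ℝ) (ρ : ℝ → ℝ) : Prop :=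
  ∀ (x y : X) (r : ℝ), dist x y ≤ r →
    ∃ (n : ℕ) (f : ℕ → X), f 0 = x ∧ f n = y ∧
      (∀ i < n, dist (f i) (f (i + 1)) ≤ s) ∧
      ∀ i ≤ n, ∀ j ≤ n, dist (f i) (f j) ≤ ρ r

theorem IsSPath.refl {X : Type*} [MetricSpace X] {s : ℝ} {M : Set X} {x : X} (hx : x ∈ M) :
    IsSPath s M x x :=
  ⟨0, fun _ => x, rfl, rfl, fun _ _ => hx, fun _ h => absurd h (Nat.not_lt_zero _)⟩

theorem IsSPath.mono {X : Type*} [MetricSpace X] {s : ℝ} {M N : Set X} {x y : X}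
    (hMN : M ⊆ N) (h : IsSPath s M x y) : IsSPath s N x y := by
  obtain ⟨n, f, h0, hn, hM, hd⟩ := h
  exact ⟨n, f, h0, hn, fun i hi => hMN (hM i hi), hd⟩

theorem IsSPath.symm {X : Type*} [MetricSpace X] {s : ℝ} {M : Set X} {x y : X}
    (h : IsSPath s M x y) : IsSPath s M y x := by
  obtain ⟨n, f, h0, hn, hM, hd⟩ := h
  refine ⟨n, fun i => f (n - i), by simpa using hn, by simpa using h0,
    fun i _ => hM _ (Nat.sub_le _ _), fun i hi => ?_⟩
  have h := hd (n - (i + 1)) (by omega)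
  rw [show n - (i + 1) + 1 = n - i by omega] at h
  rwa [dist_comm]

/-- An `s`-path can be prolonged by one step of length at most `s`. -/
theorem IsSPath.snoc {X : Type*} [MetricSpace X] {s : ℝ} {M : Set X} {x y z : X}
    (h : IsSPath s M x y) (hz : z ∈ M) (hyz : dist y z ≤ s) : IsSPath s M x z := by
  obtain ⟨n, f, h0, hn, hM, hd⟩ := h
  refine ⟨n + 1, fun i => if i ≤ n then f i else z, by simpa using h0, by simp, ?_, ?_⟩
  · intro i _
    by_cases hi : i ≤ n
    · simpa [hi] using hM i hi
    · simpa [hi] using hz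
  · intro i hi
    rcases Nat.lt_succ_iff_lt_or_eq.mp hi with hi | rfl
    · simpa [hi.le, Nat.succ_le_of_lt hi] using hd i hi
    · simpa [hn] using hyz

/-- An `s`-path component of `W` absorbs every point of `W` at distance at most `s` from it:
adjoining such a point keeps the set `s`-path connected, so maximality applies. -/
theorem IsSPathComponent.mem_of_dist_le {X : Type*} [MetricSpace X] {s : ℝ} {W C : Set X}
    (hC : IsSPathComponent s W C) {x y : X} (hx : x ∈ C) (hy : y ∈ W) (hxy : dist x y ≤ s) :
    y ∈ C := by
  obtain ⟨hCW, hconn, hmax⟩ := hC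
  have key : ∀ u ∈ C, IsSPath s (insert y C) u y := fun u hu =>
    ((hconn u hu x hx).mono (Set.subset_insert y C)).snoc (Set.mem_insert y C) hxy
  have hD : insert y C = C := by
    refine hmax _ (Set.subset_insert y C) (Set.insert_subset hy hCW) ?_
    rintro u (rfl | hu) v (rfl | hv)
    · exact IsSPath.refl (Set.mem_insert _ _)
    · exact (key v hv).symm
    · exact key u hu
    · exact (hconn u hu v hv).mono (Set.subset_insert y C)
  exact hD ▸ Set.mem_insert y C

/-- In a uniformly `s`-path connected metric space `X`, for `A ⊆ X` and `r > 0`, the union of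
any collection of `s`-path components of `X \ N_r(A)` is a coarse complementary component
of `A`. -/
theorem sUnion_sPathComponents_isCoarseComplementaryComponent
    {X : Type*} [MetricSpace X] (s : ℝ) (hs : 0 < s) (ρ : ℝ → ℝ) (hρ : ∀ t, 0 ≤ ρ t)
    (hX : UniformlySPathConnected X s ρ) (A : Set X) (r : ℝ) (hr : 0 < r)
    (𝒞 : Set (Set X)) (h𝒞 : ∀ C ∈ 𝒞, IsSPathComponent s (coarseNbhd r A)ᶜ C) :
    IsCoarseComplementaryComponent A (⋃₀ 𝒞) := by
  intro R hR
  refine ⟨R + ρ (2 * R) + r, by linarith [hρ (2 * R)], ?_⟩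
  rintro x ⟨⟨c, ⟨C, hC, hcC⟩, hxc⟩, ⟨y, hy, hxy⟩⟩
  have hcy : dist c y ≤ 2 * R := by linarith [dist_triangle_left c y x]
  obtain ⟨n, f, h0, hn, hd, hdiam⟩ := hX c y _ hcy
  have hmeet : ∃ i ≤ n, f i ∈ coarseNbhd r A := by
    by_contra! hW
    have hfC : ∀ i ≤ n, f i ∈ C := by
      intro i
      induction i with
      | zero => intro _; rwa [h0]
      | succ i ih =>
        intro hi
        exact (h𝒞 C hC).mem_of_dist_le (ih (by omega)) (hW _ hi) (hd i hi)
    exact hy ⟨C, hC, hn ▸ hfC n le_rfl⟩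
  obtain ⟨i, hi, a, ha, hia⟩ := hmeet
  have hci := hdiam 0 (Nat.zero_le n) i hi
  rw [h0] at hci
  exact ⟨a, ha, by linarith [dist_triangle4 x c (f i) a]⟩
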